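/- arXiv:1604.01060 — 2 statements merged into one kernel-verified Lean document; each statement's English description precedes it below -/
import Mathlib

section
/- Let (V⁺,V⁻) be a Jordan pair and e = (e,e') an idempotent (Q_e e' = e and Q_{e'} e = e'). Then V^± decomposes as the direct sum of the eigenspaces V_2^±, V_1^±, V_0^± of D_{e,e'} (resp. D_{e',e}) for eigenvalues 2, 1, 0, and the Peirce rule {V_k^±, V_ℓ^∓, V_m^±} ⊆ V_{k−ℓ+m}^± holds (interpreted as 0 when k−ℓ+m ∉ {0,1,2}), together with {V^±, V_2^∓, V_0^±} = 0. -/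
/-- A (linear) Jordan pair over `ℝ`: a pair of modules with trilinear products,
symmetric in the outer variables, satisfying the fundamental Jordan pair identity. -/
structure JordanPair (Vp Vm : Type*) [AddCommGroup Vp] [Module ℝ Vp]
    [AddCommGroup Vm] [Module ℝ Vm] where
  tp : Vp →ₗ[ℝ] Vm →ₗ[ℝ] Vp →ₗ[ℝ] Vp
  tm : Vm →ₗ[ℝ] Vp →ₗ[ℝ] Vm →ₗ[ℝ] Vm
  symm_p : ∀ x y z, tp x y z = tp z y x
  symm_m : ∀ x y z, tm x y z = tm z y x
  jp_p : ∀ x y u v z,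
    tp x y (tp u v z) - tp u v (tp x y z) = tp (tp x y u) v z - tp u (tm y x v) z
  jp_m : ∀ y x v u w,
    tm y x (tm v u w) - tm v u (tm y x w) = tm (tm y x v) u w - tm v (tp x y u) w

variable {Vp Vm : Type*} [AddCommGroup Vp] [Module ℝ Vp] [AddCommGroup Vm] [Module ℝ Vm]

/-- The Peirce space `V_c⁺(e) = {x : {e,e',x} = c·x}` of an idempotent. -/
def JordanPair.peirceP (J : JordanPair Vp Vm) (e : Vp) (e' : Vm) (c : ℝ) : Submodule ℝ Vp :=
  LinearMap.ker (J.tp e e' - c • LinearMap.id)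

/-- The Peirce space `V_c⁻(e) = {y : {e',e,y} = c·y}` of an idempotent. -/
def JordanPair.peirceM (J : JordanPair Vp Vm) (e : Vp) (e' : Vm) (c : ℝ) : Submodule ℝ Vm :=
  LinearMap.ker (J.tm e' e - c • LinearMap.id)

/-!
Idempotency says that `e ∈ V₂⁺` and `e' ∈ V₂⁻`. The Jordan identity, read as a commutator formula,
makes `D_{e,e'}` a derivation of the triple product up to signs, so that Peirce degrees add up. It
also gives `{e, {e', x, e'}, e} = 2 (D² - D) x` and shows that `{e, V⁻, e} ⊆ V₂⁺`; together these
yield `D (D - 1) (D - 2) = 0`. Hence `D` has no other eigenvalue, and Lagrange interpolation at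
`0, 1, 2` gives the direct sum decomposition. Finally, `4 x = {e, {e', x, e'}, e}` for `x ∈ V₂⁺`
(and dually on `V₂⁻`), which reduces `{V⁺, V₂⁻, V₀⁺} = 0` first to `{V₀⁺, e', V⁺} = 0` and then to
products vanishing for degree reasons.
-/

open Polynomial

section Eigenspaces

variable {ι K M : Type*} [Field K] [AddCommGroup M] [Module K M]

theorem aeval_basis_apply_mem_eigenspace [DecidableEq ι] {f : Module.End K M} {s : Finset ι}
    {v : ι → K} (hf : aeval f (Lagrange.nodal s v) = 0) {i : ι} (hi : i ∈ s) (x : M) :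
    aeval f (Lagrange.basis s v i) x ∈ f.eigenspace (v i) := by
  have hdvd : Lagrange.nodal s v ∣ (X - C (v i)) * Lagrange.basis s v i := by
    rw [Lagrange.basis_eq_prod_sub_inv_mul_nodal_div hi, mul_left_comm,
      ← Lagrange.nodal_erase_eq_nodal_div hi, ← Lagrange.nodal_eq_mul_nodal_erase hi]
    exact dvd_mul_left _ _
  have hzero : aeval f ((X - C (v i)) * Lagrange.basis s v i) = 0 :=
    aeval_eq_zero_of_dvd_aeval_eq_zero hdvd hf
  simpa [Module.End.mem_eigenspace_iff, sub_eq_zero] using LinearMap.congr_fun hzero x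

variable [Fintype ι]

theorem iSup_eigenspace_eq_top_of_aeval_nodal_eq_zero {f : Module.End K M} {v : ι → K}
    (hv : v.Injective) (hf : aeval f (Lagrange.nodal Finset.univ v) = 0) :
    ⨆ i, f.eigenspace (v i) = ⊤ := by
  classical
  refine eq_top_iff.2 fun x _ => ?_
  rcases isEmpty_or_nonempty ι with _ | _
  · have hx : x = 0 := by simpa [Lagrange.nodal] using LinearMap.congr_fun hf x
    exact hx ▸ zero_mem _
  · have hx : ∑ i, aeval f (Lagrange.basis Finset.univ v i) x = x := by
      rw [← LinearMap.sum_apply, ← map_sum, Lagrange.sum_basis hv.injOn Finset.univ_nonempty,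
        map_one, Module.End.one_apply]
    rw [← hx]
    exact Submodule.sum_mem_iSup fun i =>
      aeval_basis_apply_mem_eigenspace hf (Finset.mem_univ i) x

theorem isInternal_eigenspace_of_aeval_nodal_eq_zero [DecidableEq ι] {f : Module.End K M}
    {v : ι → K} (hv : v.Injective) (hf : aeval f (Lagrange.nodal Finset.univ v) = 0) :
    DirectSum.IsInternal fun i => f.eigenspace (v i) :=
  DirectSum.isInternal_submodule_of_iSupIndep_of_iSup_eq_top
    (f.eigenspaces_iSupIndep.comp hv) (iSup_eigenspace_eq_top_of_aeval_nodal_eq_zero hv hf)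

end Eigenspaces

theorem intCast_notMem_zero_one_two {n : ℤ} (hn : n < 0 ∨ 2 < n) :
    (n : ℝ) ∉ ({0, 1, 2} : Set ℝ) := by
  simp only [Set.mem_insert_iff, Set.mem_singleton_iff]
  norm_cast
  lia

namespace JordanPair

/-- The opposite Jordan pair `(V⁻, V⁺)`, used to transfer results on `V⁺` to `V⁻`. -/
def op (J : JordanPair Vp Vm) : JordanPair Vm Vp where
  tp := J.tm
  tm := J.tp
  symm_p := J.symm_m
  symm_m := J.symm_p
  jp_p := J.jp_m
  jp_m := J.jp_p

variable (J : JordanPair Vp Vm) {e : Vp} {e' : Vm}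

theorem peirceP_eq_eigenspace (e : Vp) (e' : Vm) (c : ℝ) :
    J.peirceP e e' c = Module.End.eigenspace (J.tp e e') c :=
  Module.End.eigenspace_def.symm

theorem mem_peirceP {c : ℝ} {x : Vp} : x ∈ J.peirceP e e' c ↔ J.tp e e' x = c • x := by
  rw [peirceP_eq_eigenspace, Module.End.mem_eigenspace_iff]

theorem mem_peirceM {c : ℝ} {y : Vm} : y ∈ J.peirceM e e' c ↔ J.tm e' e y = c • y :=
  J.op.mem_peirceP

theorem mem_peirceP_two_iff : e ∈ J.peirceP e e' 2 ↔ (2⁻¹ : ℝ) • J.tp e e' e = e := by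
  rw [mem_peirceP, inv_smul_eq_iff₀ two_ne_zero]

theorem tp_mem_peirceP {k l m : ℝ} {x : Vp} {y : Vm} {z : Vp} (hx : x ∈ J.peirceP e e' k)
    (hy : y ∈ J.peirceM e e' l) (hz : z ∈ J.peirceP e e' m) :
    J.tp x y z ∈ J.peirceP e e' (k - l + m) := by
  rw [mem_peirceP] at hx hz ⊢
  rw [mem_peirceM] at hy
  have jordan := J.jp_p e e' x y z
  simp only [hx, hy, hz, map_smul, LinearMap.smul_apply] at jordan
  linear_combination (norm := module) jordan

theorem tm_mem_peirceM {k l m : ℝ} {y : Vm} {x : Vp} {w : Vm} (hy : y ∈ J.peirceM e e' k)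
    (hx : x ∈ J.peirceP e e' l) (hw : w ∈ J.peirceM e e' m) :
    J.tm y x w ∈ J.peirceM e e' (k - l + m) :=
  J.op.tp_mem_peirceP hy hx hw

theorem tp_tm_self_eq (he : e ∈ J.peirceP e e' 2) (x : Vp) :
    J.tp e (J.tm e' x e') e = (2 : ℝ) • (J.tp e e' (J.tp e e' x) - J.tp e e' x) := by
  rw [mem_peirceP] at he
  have jordan := J.jp_p x e' e e' e
  rw [he, map_smul, J.symm_p x e' e, J.symm_p (J.tp e e' x) e' e] at jordan
  linear_combination (norm := module) jordan

theorem tp_tm_self_eq_of_mem_peirceP_two (he : e ∈ J.peirceP e e' 2) {x : Vp}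
    (hx : x ∈ J.peirceP e e' 2) : J.tp e (J.tm e' x e') e = (4 : ℝ) • x := by
  rw [J.tp_tm_self_eq he, J.mem_peirceP.1 hx, map_smul, J.mem_peirceP.1 hx]
  module

theorem tp_self_mem_peirceP_two (he : e ∈ J.peirceP e e' 2) (y : Vm) :
    J.tp e y e ∈ J.peirceP e e' 2 := by
  rw [mem_peirceP] at he ⊢
  have jordan₁ := J.jp_p e e' e y e
  have jordan₂ := J.jp_p e y e e' e
  rw [J.symm_p (J.tp e y e) e' e, J.symm_m y e e'] at jordan₂
  simp only [he, map_smul, LinearMap.smul_apply] at jordan₁ jordan₂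
  linear_combination (norm := module) (3⁻¹ : ℝ) • (jordan₁ - jordan₂)

theorem aeval_tp_nodal_eq_zero (he : e ∈ J.peirceP e e' 2) :
    aeval (J.tp e e' : Module.End ℝ Vp)
      (Lagrange.nodal Finset.univ fun i : Fin 3 => ((i : ℕ) : ℝ)) = 0 := by
  ext x
  have htwo := J.mem_peirceP.1 (J.tp_self_mem_peirceP_two he (J.tm e' x e'))
  simp only [J.tp_tm_self_eq he, map_smul, map_sub] at htwo
  simp only [Lagrange.nodal, Fin.prod_univ_three, Fin.val_zero, Fin.val_one, Fin.val_two,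
    Nat.cast_zero, Nat.cast_one, Nat.cast_ofNat, map_mul, map_sub, aeval_X, aeval_C,
    Module.End.mul_apply, LinearMap.sub_apply, Module.algebraMap_end_apply, map_smul,
    LinearMap.zero_apply]
  linear_combination (norm := module) (2⁻¹ : ℝ) • htwo

theorem isInternal_peirceP (he : e ∈ J.peirceP e e' 2) :
    DirectSum.IsInternal fun i : Fin 3 => J.peirceP e e' ((i : ℕ) : ℝ) := by
  simp only [peirceP_eq_eigenspace]
  exact isInternal_eigenspace_of_aeval_nodal_eq_zero
    (Nat.cast_injective.comp Fin.val_injective) (J.aeval_tp_nodal_eq_zero he)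

theorem eq_zero_of_mem_peirceP (he : e ∈ J.peirceP e e' 2) {c : ℝ} (hc : c ∉ ({0, 1, 2} : Set ℝ))
    {x : Vp} (hx : x ∈ J.peirceP e e' c) : x = 0 := by
  have heval := Module.End.aeval_apply_of_mem_apply_eq_smul
    (p := Lagrange.nodal Finset.univ fun i : Fin 3 => ((i : ℕ) : ℝ)) (J.mem_peirceP.1 hx)
  rw [J.aeval_tp_nodal_eq_zero he, LinearMap.zero_apply] at heval
  refine (smul_eq_zero.1 heval.symm).resolve_left ?_
  simpa [Lagrange.eval_nodal, Fin.prod_univ_three, sub_eq_zero, or_assoc] using hc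

theorem tp_eq_zero_of_notMem (he : e ∈ J.peirceP e e' 2) {k l m : ℝ} {x : Vp} {y : Vm} {z : Vp}
    (hx : x ∈ J.peirceP e e' k) (hy : y ∈ J.peirceM e e' l) (hz : z ∈ J.peirceP e e' m)
    (hklm : k - l + m ∉ ({0, 1, 2} : Set ℝ)) : J.tp x y z = 0 :=
  J.eq_zero_of_mem_peirceP he hklm (J.tp_mem_peirceP hx hy hz)

theorem tm_eq_zero_of_notMem (he' : e' ∈ J.peirceM e e' 2) {k l m : ℝ} {y : Vm} {x : Vp} {w : Vm}
    (hy : y ∈ J.peirceM e e' k) (hx : x ∈ J.peirceP e e' l) (hw : w ∈ J.peirceM e e' m)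
    (hklm : k - l + m ∉ ({0, 1, 2} : Set ℝ)) : J.tm y x w = 0 :=
  J.op.tp_eq_zero_of_notMem he' hy hx hw hklm

theorem tp_idem_eq_zero_of_mem_zero_of_mem_two (he : e ∈ J.peirceP e e' 2)
    (he' : e' ∈ J.peirceM e e' 2) {z : Vp} (hz : z ∈ J.peirceP e e' 0) {x : Vp}
    (hx : x ∈ J.peirceP e e' 2) : J.tp z e' x = 0 := by
  have hw : J.tm e' x e' ∈ J.peirceM e e' 2 := J.op.tp_self_mem_peirceP_two he' x
  have hzw : J.tm e' z (J.tm e' x e') = 0 :=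
    J.tm_eq_zero_of_notMem he' he' hz hw (by norm_num)
  have hze : J.tp z e' e = 0 := by rw [J.symm_p, J.mem_peirceP.1 hz, zero_smul]
  have jordan := J.jp_p z e' e (J.tm e' x e') e
  simpa [hzw, hze, J.tp_tm_self_eq_of_mem_peirceP_two he hx] using jordan

theorem tp_idem_eq_zero_of_mem_zero (he : e ∈ J.peirceP e e' 2) (he' : e' ∈ J.peirceM e e' 2)
    {z : Vp} (hz : z ∈ J.peirceP e e' 0) (x : Vp) : J.tp z e' x = 0 := by
  suffices hker : ⊤ ≤ LinearMap.ker (J.tp z e') from hker Submodule.mem_top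
  rw [← (J.isInternal_peirceP he).submodule_iSup_eq_top, iSup_le_iff]
  intro i x hx
  rw [LinearMap.mem_ker]
  fin_cases i
  · exact J.tp_eq_zero_of_notMem he hz he' hx (by norm_num)
  · exact J.tp_eq_zero_of_notMem he hz he' hx (by norm_num)
  · exact J.tp_idem_eq_zero_of_mem_zero_of_mem_two he he' hz (by simpa using hx)

theorem tp_eq_zero_of_mem_two_of_mem_zero (he : e ∈ J.peirceP e e' 2)
    (he' : e' ∈ J.peirceM e e' 2) (x : Vp) {y : Vm} (hy : y ∈ J.peirceM e e' 2) {z : Vp}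
    (hz : z ∈ J.peirceP e e' 0) : J.tp x y z = 0 := by
  have hzero (u : Vp) : J.tp u e' z = 0 := by
    rw [J.symm_p, J.tp_idem_eq_zero_of_mem_zero he he' hz]
  have hfour : J.tm e' (J.tp e y e) e' = (4 : ℝ) • y :=
    J.op.tp_tm_self_eq_of_mem_peirceP_two he' hy
  have jordan := J.jp_p (J.tp e y e) e' x e' z
  simpa [hzero, hfour] using jordan

end JordanPair

/-- **Peirce decomposition.** Let `(e,e')` be an idempotent of a Jordan pair, i.e.
`Q_e e' = e` and `Q_{e'} e = e'`.  Then `V⁺` and `V⁻` decompose as direct sums of the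
eigenspaces of `D_{e,e'}` resp. `D_{e',e}` for the eigenvalues `2, 1, 0`, the Peirce rule
`{V_k^±, V_ℓ^∓, V_m^±} ⊆ V_{k−ℓ+m}^±` holds (interpreted as `0` when `k−ℓ+m ∉ {0,1,2}`),
and `{V^±, V_2^∓, V_0^±} = 0`. -/
theorem jordanPair_peirce_decomposition (J : JordanPair Vp Vm) (e : Vp) (e' : Vm)
    (he : (2⁻¹ : ℝ) • J.tp e e' e = e) (he' : (2⁻¹ : ℝ) • J.tm e' e e' = e') :
    -- direct sum decompositions into the eigenspaces for eigenvalues 0, 1, 2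
    (DirectSum.IsInternal fun i : Fin 3 => J.peirceP e e' ((i : ℕ) : ℝ)) ∧
    (DirectSum.IsInternal fun i : Fin 3 => J.peirceM e e' ((i : ℕ) : ℝ)) ∧
    -- Peirce rules on the `+` side
    (∀ k l m : ℕ, k ≤ 2 → l ≤ 2 → m ≤ 2 →
      ∀ x ∈ J.peirceP e e' k, ∀ y ∈ J.peirceM e e' l, ∀ z ∈ J.peirceP e e' m,
        ((0 ≤ (k : ℤ) - l + m ∧ (k : ℤ) - l + m ≤ 2 →
            J.tp x y z ∈ J.peirceP e e' (((k : ℤ) - l + m : ℤ) : ℝ)) ∧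
          (((k : ℤ) - l + m < 0 ∨ 2 < (k : ℤ) - l + m) → J.tp x y z = 0))) ∧
    -- Peirce rules on the `−` side
    (∀ k l m : ℕ, k ≤ 2 → l ≤ 2 → m ≤ 2 →
      ∀ y ∈ J.peirceM e e' k, ∀ x ∈ J.peirceP e e' l, ∀ w ∈ J.peirceM e e' m,
        ((0 ≤ (k : ℤ) - l + m ∧ (k : ℤ) - l + m ≤ 2 →
            J.tm y x w ∈ J.peirceM e e' (((k : ℤ) - l + m : ℤ) : ℝ)) ∧
          (((k : ℤ) - l + m < 0 ∨ 2 < (k : ℤ) - l + m) → J.tm y x w = 0))) ∧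
    -- `{V⁺, V₂⁻, V₀⁺} = 0` and `{V⁻, V₂⁺, V₀⁻} = 0`
    (∀ x : Vp, ∀ y ∈ J.peirceM e e' 2, ∀ z ∈ J.peirceP e e' 0, J.tp x y z = 0) ∧
    (∀ y : Vm, ∀ x ∈ J.peirceP e e' 2, ∀ w ∈ J.peirceM e e' 0, J.tm y x w = 0) := by
  rw [← J.mem_peirceP_two_iff] at he
  replace he' : e' ∈ J.peirceM e e' 2 := J.op.mem_peirceP_two_iff.2 he'
  refine ⟨J.isInternal_peirceP he, J.op.isInternal_peirceP he', ?_, ?_,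
    fun x y hy z hz => J.tp_eq_zero_of_mem_two_of_mem_zero he he' x hy hz,
    fun y x hx w hw => J.op.tp_eq_zero_of_mem_two_of_mem_zero he' he y hx hw⟩
  · intro k l m _ _ _ x hx y hy z hz
    exact ⟨fun _ => by exact_mod_cast J.tp_mem_peirceP hx hy hz,
      fun h => J.tp_eq_zero_of_notMem he hx hy hz (by simpa using intCast_notMem_zero_one_two h)⟩
  · intro k l m _ _ _ y hy x hx w hw
    exact ⟨fun _ => by exact_mod_cast J.tm_mem_peirceM hy hx hw,
      fun h => J.tm_eq_zero_of_notMem he' hy hx hw (by simpa using intCast_notMem_zero_one_two h)⟩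
end

section
/- Let Ω be the symmetric cone of a Euclidean Jordan algebra A of rank r and dimension n, with determinant Δ and trace form (x|y). For λ ∈ ℂ and μ ∈ ℝ, the integral ∫_Ω K_λ(x) Δ(x)^μ dx of the K-Bessel function K_λ(x) = ∫_Ω e^{−tr(v)−(x|v^{-1})} Δ(v)^{−λ} dv converges if and only if μ > −1 and μ − Re λ > −2 − (r−1)d/2, and in that case equals Γ_Ω(μ + n/r)·Γ_Ω(μ − λ + 2n/r), where Γ_Ω is the Gindikin Gamma function of the cone and d the Peirce multiplicity. -/
open MeasureTheory Real
open scoped RealInnerProductSpace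

/-- The complex Gindikin Gamma function
`Γ_Ω(z) = (2π)^{r(r−1)d/4} ∏_{i=0}^{r-1} Γ(z − i·d/2)` of a symmetric cone of rank `r`
and multiplicity `d`. -/
noncomputable def gindikinGamma (r : ℕ) (d : ℝ) (z : ℂ) : ℂ :=
  (((2 * Real.pi) ^ ((r : ℝ) * ((r : ℝ) - 1) * d / 4) : ℝ) : ℂ) *
    ∏ i ∈ Finset.range r, Complex.Gamma (z - (i : ℝ) * d / 2)

/-- The K-Bessel function `𝒦_λ(x) = ∫_Ω e^{−tr(v)−(x|v⁻¹)} Δ(v)^{−λ} dv` of a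
symmetric cone `Ω` with determinant `Δ`, trace `tr` and inversion `jinv`. -/
noncomputable def coneKBessel {E : Type*} [NormedAddCommGroup E] [InnerProductSpace ℝ E]
    [MeasurableSpace E] (μ : Measure E) (Ω : Set E) (Δ tr : E → ℝ) (jinv : E → E)
    (lam : ℂ) (x : E) : ℂ :=
  ∫ v in Ω, Complex.exp (((-(tr v) - ⟪x, jinv v⟫ : ℝ) : ℂ)) * ((Δ v : ℂ) ^ (-lam)) ∂μ

/-!
By Fubini, integrating first over `x`, the Laplace transform formula turns
`∫_Ω 𝒦_λ(x) Δ(x)^z dx` into `Γ_Ω(z + n/r) ∫_Ω e^{-(v|e)} Δ(v)^{z + n/r - λ} dv`, which is again a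
Laplace transform; since the formula is known for real exponents only, it is first continued
analytically in the exponent. This gives convergence and value in the stated region.

For the converse, `𝒦_λ` is complex-valued, so positivity is of no help. Suppose instead that the
integral converges at `m`. It converges far to the right as well, hence on a whole closed strip
`m ≤ Re z ≤ b`, where `Z(z) = ∫_Ω 𝒦_λ(x) Δ(x)^z dx` is continuous, and holomorphic in the interior.
The identity `Z(z) / (Γ_Ω(z + n/r) Γ_Ω(z - λ + 2n/r)) = Δ(e)^{-(z - λ + 2n/r)}`, valid near `b`,
therefore persists on the closed strip. Its right side never vanishes, so no pole of either Gamma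
function may satisfy `Re z ≥ m`; but there are poles at `z = -1` and at `z = λ - 1 - n/r`.
-/

section Analysis

open Set Filter Topology

lemma rpow_le_rpow_add_rpow {t a b s : ℝ} (ht : 0 < t) (hs : s ∈ Icc a b) :
    t ^ s ≤ t ^ a + t ^ b := by
  rcases le_total 1 t with h | h
  · exact (rpow_le_rpow_of_exponent_le h hs.2).trans
      (le_add_of_nonneg_left (rpow_pos_of_pos ht a).le)
  · exact (rpow_le_rpow_of_exponent_ge ht h hs.1).trans
      (le_add_of_nonneg_right (rpow_pos_of_pos ht b).le)

lemma abs_log_le_rpow_neg_add_rpow_div {t δ : ℝ} (ht : 0 < t) (hδ : 0 < δ) :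
    |log t| ≤ (t ^ (-δ) + t ^ δ) / δ := by
  have hlog : log t ≤ t ^ δ / δ := log_le_rpow_div ht.le hδ
  have hlog_inv : -log t ≤ t ^ (-δ) / δ := by
    simpa only [log_inv, inv_rpow ht.le, ← rpow_neg ht.le] using
      log_le_rpow_div (inv_pos.2 ht).le hδ
  rw [add_div, abs_le']
  constructor <;> linarith [div_pos (rpow_pos_of_pos ht δ) hδ, div_pos (rpow_pos_of_pos ht (-δ)) hδ]

lemma rpow_mul_abs_log_le {t a b s δ : ℝ} (ht : 0 < t) (hδ : 0 < δ)
    (hs : s ∈ Icc (a + δ) (b - δ)) : t ^ s * |log t| ≤ 2 / δ * (t ^ a + t ^ b) :=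
  calc t ^ s * |log t| ≤ t ^ s * ((t ^ (-δ) + t ^ δ) / δ) := by
        gcongr
        exact abs_log_le_rpow_neg_add_rpow_div ht hδ
    _ = (t ^ (s + -δ) + t ^ (s + δ)) / δ := by rw [rpow_add ht, rpow_add ht]; ring
    _ ≤ ((t ^ a + t ^ b) + (t ^ a + t ^ b)) / δ := by
        gcongr <;> refine rpow_le_rpow_add_rpow ht ⟨?_, ?_⟩ <;> linarith [hs.1, hs.2]
    _ = 2 / δ * (t ^ a + t ^ b) := by ring

lemma eqOn_re_preimage_Icc_of_eq_ofReal {F G : ℂ → ℂ} {a b c : ℝ}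
    (hF : DiffContOnCl ℂ F (Complex.re ⁻¹' Ioo a b))
    (hG : DiffContOnCl ℂ G (Complex.re ⁻¹' Ioo a b)) (hac : a ≤ c) (hcb : c < b)
    (h : ∀ s : ℝ, s ∈ Ioo c b → F s = G s) : EqOn F G (Complex.re ⁻¹' Icc a b) := by
  have hopen : IsOpen (Complex.re ⁻¹' Ioo a b) := isOpen_Ioo.preimage Complex.continuous_re
  have hconn : IsPreconnected (Complex.re ⁻¹' Ioo a b) :=
    ((convex_Ioo a b).linear_preimage Complex.reLm).isPreconnected
  obtain ⟨x, hx⟩ := exists_between hcb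
  have hfreq : ∃ᶠ z in 𝓝[≠] (x : ℂ), F z = G z := by
    have hcoe : Tendsto ((↑) : ℝ → ℂ) (𝓝[≠] x) (𝓝[≠] (x : ℂ)) :=
      Complex.continuous_ofReal.continuousWithinAt.tendsto_nhdsWithin fun s hs => by simpa using hs
    refine hcoe.frequently (Eventually.frequently ?_)
    filter_upwards [nhdsWithin_le_nhds (Ioo_mem_nhds hx.1 hx.2)] with s hs using h s hs
  have hEq : EqOn F G (Complex.re ⁻¹' Ioo a b) :=
    (hF.differentiableOn.analyticOnNhd hopen).eqOn_of_preconnected_of_frequently_eq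
      (hG.differentiableOn.analyticOnNhd hopen) hconn ⟨hac.trans_lt hx.1, hx.2⟩ hfreq
  have hclosure : closure (Complex.re ⁻¹' Ioo a b) = Complex.re ⁻¹' Icc a b := by
    rw [Complex.closure_preimage_re, closure_Ioo (hac.trans_lt hcb).ne]
  rw [← hclosure]
  exact hEq.of_subset_closure hF.continuousOn hG.continuousOn subset_closure Subset.rfl

end Analysis

section ZetaIntegral

open Set

variable {α : Type*} [MeasurableSpace α] {ν : Measure α} {f : α → ℂ} {g : α → ℝ} {z u w : ℂ}

/-- Convergence of the zeta integral `∫ f gᶻ dν` of `f` along the positive function `g`; compare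
`MellinConvergent`. -/
def ZetaConvergent (ν : Measure α) (f : α → ℂ) (g : α → ℝ) (z : ℂ) : Prop :=
  Integrable (fun x => f x * (g x : ℂ) ^ z) ν

/-- The zeta integral `Z(f, z) = ∫ f gᶻ dν`: a Mellin transform along the positive function `g`,
which for us is the determinant of a cone. -/
noncomputable def zetaIntegral (ν : Measure α) (f : α → ℂ) (g : α → ℝ) (z : ℂ) : ℂ :=
  ∫ x, f x * (g x : ℂ) ^ z ∂ν

lemma norm_mul_cpow_ofReal {t : ℝ} (ht : 0 < t) (w z : ℂ) : ‖w * (t : ℂ) ^ z‖ = ‖w‖ * t ^ z.re := by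
  rw [norm_mul, Complex.norm_cpow_eq_rpow_re_of_pos ht]

lemma mul_cpow_ofReal_ae_eq (hpos : ∀ᵐ x ∂ν, 0 < g x) (s : ℝ) :
    (fun x => f x * (g x : ℂ) ^ (s : ℂ)) =ᵐ[ν] fun x => f x * ((g x ^ s : ℝ) : ℂ) := by
  filter_upwards [hpos] with x hx
  rw [Complex.ofReal_cpow hx.le]

lemma zetaConvergent_ofReal_iff (hpos : ∀ᵐ x ∂ν, 0 < g x) (s : ℝ) :
    ZetaConvergent ν f g s ↔ Integrable (fun x => f x * ((g x ^ s : ℝ) : ℂ)) ν :=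
  integrable_congr (mul_cpow_ofReal_ae_eq hpos s)

lemma zetaIntegral_ofReal (hpos : ∀ᵐ x ∂ν, 0 < g x) (s : ℝ) :
    zetaIntegral ν f g s = ∫ x, f x * ((g x ^ s : ℝ) : ℂ) ∂ν :=
  integral_congr_ae (mul_cpow_ofReal_ae_eq hpos s)

lemma zetaIntegral_ofReal_ofReal (hpos : ∀ᵐ x ∂ν, 0 < g x) (φ : α → ℝ) (s : ℝ) :
    zetaIntegral ν (fun x => (φ x : ℂ)) g s = ((∫ x, φ x * g x ^ s ∂ν : ℝ) : ℂ) := by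
  rw [zetaIntegral_ofReal hpos, ← integral_complex_ofReal]
  simp only [Complex.ofReal_mul]

lemma aestronglyMeasurable_cpow_const (hg : AEMeasurable g ν) (z : ℂ) :
    AEStronglyMeasurable (fun x => (g x : ℂ) ^ z) ν :=
  ((Complex.measurable_ofReal.comp_aemeasurable hg).pow_const z).aestronglyMeasurable

lemma ZetaConvergent.of_zetaIntegral_ne_zero (h : zetaIntegral ν f g z ≠ 0) :
    ZetaConvergent ν f g z :=
  not_imp_comm.1 integral_undef h

lemma ZetaConvergent.aestronglyMeasurable_left (hg : AEMeasurable g ν) (hpos : ∀ᵐ x ∂ν, 0 < g x)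
    (h : ZetaConvergent ν f g z) : AEStronglyMeasurable f ν := by
  refine (Integrable.aestronglyMeasurable h).mul (aestronglyMeasurable_cpow_const hg (-z))
    |>.congr ?_
  filter_upwards [hpos] with x hx
  have hx' : (g x : ℂ) ≠ 0 := Complex.ofReal_ne_zero.2 hx.ne'
  rw [Pi.mul_apply, mul_assoc, ← Complex.cpow_add _ _ hx', add_neg_cancel, Complex.cpow_zero,
    mul_one]

lemma ZetaConvergent.integrable_norm_mul_rpow_add (hpos : ∀ᵐ x ∂ν, 0 < g x)
    (hu : ZetaConvergent ν f g u) (hw : ZetaConvergent ν f g w) :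
    Integrable (fun x => ‖f x‖ * (g x ^ u.re + g x ^ w.re)) ν := by
  refine (Integrable.add hu.norm hw.norm).congr ?_
  filter_upwards [hpos] with x hx
  simp only [Pi.add_apply, norm_mul_cpow_ofReal hx, mul_add]

lemma norm_mul_cpow_ofReal_le {t : ℝ} (ht : 0 < t) (y : ℂ) (hz : z.re ∈ Icc u.re w.re) :
    ‖y * (t : ℂ) ^ z‖ ≤ ‖y‖ * (t ^ u.re + t ^ w.re) := by
  rw [norm_mul_cpow_ofReal ht]
  gcongr
  exact rpow_le_rpow_add_rpow ht hz

lemma norm_mul_cpow_mul_log_le {t a b δ : ℝ} (ht : 0 < t) (hδ : 0 < δ) (y : ℂ)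
    (hz : z.re ∈ Icc (a + δ) (b - δ)) :
    ‖y * ((t : ℂ) ^ z * Complex.log t)‖ ≤ 2 / δ * (‖y‖ * (t ^ a + t ^ b)) :=
  calc ‖y * ((t : ℂ) ^ z * Complex.log t)‖ = ‖y‖ * (t ^ z.re * |log t|) := by
        rw [norm_mul, norm_mul, Complex.norm_cpow_eq_rpow_re_of_pos ht, ← Complex.ofReal_log ht.le,
          Complex.norm_real, norm_eq_abs]
    _ ≤ ‖y‖ * (2 / δ * (t ^ a + t ^ b)) :=
        mul_le_mul_of_nonneg_left (rpow_mul_abs_log_le ht hδ hz) (norm_nonneg y)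
    _ = 2 / δ * (‖y‖ * (t ^ a + t ^ b)) := by ring

lemma ZetaConvergent.of_re_mem_Icc (hg : AEMeasurable g ν) (hpos : ∀ᵐ x ∂ν, 0 < g x)
    (hu : ZetaConvergent ν f g u) (hw : ZetaConvergent ν f g w) (hz : z.re ∈ Icc u.re w.re) :
    ZetaConvergent ν f g z :=
  (integrable_norm_mul_rpow_add hpos hu hw).mono'
    ((hu.aestronglyMeasurable_left hg hpos).mul (aestronglyMeasurable_cpow_const hg z))
    (hpos.mono fun _ hx => norm_mul_cpow_ofReal_le hx _ hz)

lemma continuousOn_zetaIntegral (hg : AEMeasurable g ν) (hpos : ∀ᵐ x ∂ν, 0 < g x)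
    (hu : ZetaConvergent ν f g u) (hw : ZetaConvergent ν f g w) :
    ContinuousOn (zetaIntegral ν f g) (Complex.re ⁻¹' Icc u.re w.re) := by
  refine continuousOn_of_dominated (bound := fun x => ‖f x‖ * (g x ^ u.re + g x ^ w.re))
    (fun z hz => (hu.of_re_mem_Icc hg hpos hw hz).1)
    (fun z hz => hpos.mono fun _ hx => norm_mul_cpow_ofReal_le hx _ hz)
    (hu.integrable_norm_mul_rpow_add hpos hw) ?_
  filter_upwards [hpos] with x hx
  have hx' : (g x : ℂ) ≠ 0 := Complex.ofReal_ne_zero.2 hx.ne'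
  exact (continuous_const.mul (continuous_id.const_cpow (Or.inl hx'))).continuousOn

lemma differentiableAt_zetaIntegral (hg : AEMeasurable g ν) (hpos : ∀ᵐ x ∂ν, 0 < g x)
    (hu : ZetaConvergent ν f g u) (hw : ZetaConvergent ν f g w) (hz : z.re ∈ Ioo u.re w.re) :
    DifferentiableAt ℂ (zetaIntegral ν f g) z := by
  have hf : AEStronglyMeasurable f ν := hu.aestronglyMeasurable_left hg hpos
  have hlog : AEStronglyMeasurable (fun x => Complex.log (g x)) ν :=
    (Complex.measurable_log.comp_aemeasurable
      (Complex.measurable_ofReal.comp_aemeasurable hg)).aestronglyMeasurable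
  obtain ⟨δ, hδ, hδa, hδb⟩ : ∃ δ > 0, u.re + 2 * δ ≤ z.re ∧ z.re + 2 * δ ≤ w.re := by
    have hmin := lt_min (sub_pos.2 hz.1) (sub_pos.2 hz.2)
    refine ⟨min (z.re - u.re) (w.re - z.re) / 2, half_pos hmin, ?_, ?_⟩
    · linarith [min_le_left (z.re - u.re) (w.re - z.re)]
    · linarith [min_le_right (z.re - u.re) (w.re - z.re)]
  have hre : ∀ s ∈ Metric.ball z δ, s.re ∈ Icc (u.re + δ) (w.re - δ) := by
    intro s hs
    have hdist : |s.re - z.re| < δ :=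
      (Complex.abs_re_le_norm (s - z)).trans_lt (mem_ball_iff_norm.1 hs)
    constructor <;> linarith [abs_lt.1 hdist |>.1, abs_lt.1 hdist |>.2]
  have hderiv := hasDerivAt_integral_of_dominated_loc_of_deriv_le (μ := ν)
    (F := fun s x => f x * (g x : ℂ) ^ s)
    (F' := fun s x => f x * ((g x : ℂ) ^ s * Complex.log (g x)))
    (bound := fun x => 2 / δ * (‖f x‖ * (g x ^ u.re + g x ^ w.re)))
    (Metric.ball_mem_nhds z hδ)
    (.of_forall fun s => hf.mul (aestronglyMeasurable_cpow_const hg s))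
    (hu.of_re_mem_Icc hg hpos hw ⟨hz.1.le, hz.2.le⟩)
    (hf.mul ((aestronglyMeasurable_cpow_const hg z).mul hlog)) ?_
    ((hu.integrable_norm_mul_rpow_add hpos hw).const_mul _) ?_
  · exact hderiv.2.differentiableAt
  · exact hpos.mono fun x hx s hs => norm_mul_cpow_mul_log_le hx hδ (f x) (hre s hs)
  · filter_upwards [hpos] with x hx s _
    have hx' : (g x : ℂ) ≠ 0 := Complex.ofReal_ne_zero.2 hx.ne'
    simpa using ((hasDerivAt_id s).const_cpow (Or.inl hx')).const_mul (f x)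

lemma diffContOnCl_zetaIntegral (hg : AEMeasurable g ν) (hpos : ∀ᵐ x ∂ν, 0 < g x)
    (hu : ZetaConvergent ν f g u) (hw : ZetaConvergent ν f g w) :
    DiffContOnCl ℂ (zetaIntegral ν f g) (Complex.re ⁻¹' Ioo u.re w.re) where
  differentiableOn _ hz :=
    (differentiableAt_zetaIntegral hg hpos hu hw hz).differentiableWithinAt
  continuousOn := by
    rw [Complex.closure_preimage_re]
    exact (continuousOn_zetaIntegral hg hpos hu hw).mono
      (preimage_mono (closure_minimal Ioo_subset_Icc_self isClosed_Icc))

lemma zetaIntegral_mul_eqOn_re_preimage_Icc (hg : AEMeasurable g ν) (hpos : ∀ᵐ x ∂ν, 0 < g x)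
    (hu : ZetaConvergent ν f g u) (hw : ZetaConvergent ν f g w) {P G : ℂ → ℂ}
    (hP : Differentiable ℂ P) (hG : Differentiable ℂ G) {c : ℝ} (huc : u.re ≤ c) (hcw : c < w.re)
    (h : ∀ s : ℝ, s ∈ Ioo c w.re → zetaIntegral ν f g s * P s = G s) :
    EqOn (fun z => zetaIntegral ν f g z * P z) G (Complex.re ⁻¹' Icc u.re w.re) :=
  eqOn_re_preimage_Icc_of_eq_ofReal
    ((diffContOnCl_zetaIntegral hg hpos hu hw).smul hP.diffContOnCl) hG.diffContOnCl huc hcw h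

end ZetaIntegral

section GindikinGamma

variable {r : ℕ} {d : ℝ} {z : ℂ}

/-- The ratio `n / r` of the dimension to the rank of a symmetric cone of rank `r` and Peirce
multiplicity `d`. -/
noncomputable def dimRankRatio (r : ℕ) (d : ℝ) : ℝ := 1 + ((r : ℝ) - 1) * d / 2

lemma gindikinGamma_ofReal (r : ℕ) (d l : ℝ) :
    gindikinGamma r d l =
      (((2 * π) ^ ((r : ℝ) * ((r : ℝ) - 1) * d / 4) *
        ∏ i ∈ Finset.range r, Gamma (l - (i : ℝ) * d / 2) : ℝ) : ℂ) := by
  simp only [gindikinGamma, Complex.ofReal_mul, Complex.ofReal_prod, ← Complex.Gamma_ofReal]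
  push_cast
  rfl

lemma gindikinGamma_ne_zero (hd : 0 ≤ d) (hz : dimRankRatio r d - 1 < z.re) :
    gindikinGamma r d z ≠ 0 := by
  refine mul_ne_zero (Complex.ofReal_ne_zero.2 (by positivity)) (Finset.prod_ne_zero_iff.2 ?_)
  intro i hi
  have hi' : (i : ℝ) ≤ (r : ℝ) - 1 := by
    rw [le_sub_iff_add_le]
    exact_mod_cast Finset.mem_range.1 hi
  have hre : (z - (i : ℝ) * d / 2).re = z.re - i * d / 2 := by norm_cast
  apply Complex.Gamma_ne_zero_of_re_pos
  rw [hre, sub_pos]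
  calc (i : ℝ) * d / 2 ≤ ((r : ℝ) - 1) * d / 2 := by gcongr
    _ < z.re := by simpa only [dimRankRatio, add_sub_cancel_left] using hz

lemma differentiable_inv_gindikinGamma (r : ℕ) (d : ℝ) :
    Differentiable ℂ fun z => (gindikinGamma r d z)⁻¹ := by
  simp only [gindikinGamma, mul_inv, ← Finset.prod_inv_distrib]
  exact (Differentiable.fun_finsetProd fun i _ =>
    Complex.differentiable_one_div_Gamma.comp (differentiable_id.sub_const _)).const_mul _

-- `n / r - 1` is a pole of `Γ_Ω`, at which Mathlib's `Γ` takes the value `0`.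
lemma gindikinGamma_dimRankRatio_sub_one (hr : 1 ≤ r) (d : ℝ) :
    gindikinGamma r d (dimRankRatio r d - 1) = 0 := by
  refine mul_eq_zero_of_right _
    (Finset.prod_eq_zero (Finset.mem_range.2 (Nat.sub_one_lt_of_lt hr)) ?_)
  rw [← Complex.Gamma_zero, dimRankRatio, Nat.cast_sub hr]
  push_cast
  ring_nf

end GindikinGamma

section GindikinCone

open Set

variable {E : Type*} [NormedAddCommGroup E] [InnerProductSpace ℝ E]

/-- The kernel `x ↦ e^{-(x|y)}` of the Laplace transform, with complex values. -/
noncomputable def expNegInner (y x : E) : ℂ := ((exp (-⟪x, y⟫) : ℝ) : ℂ)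

lemma expNegInner_ne_zero (y x : E) : expNegInner y x ≠ 0 :=
  Complex.ofReal_ne_zero.2 (exp_pos _).ne'

lemma ofReal_norm_expNegInner (y x : E) : (‖expNegInner y x‖ : ℂ) = expNegInner y x := by
  rw [expNegInner, Complex.norm_real, norm_of_nonneg (exp_pos _).le]

variable [MeasurableSpace E]
  {μ : Measure E} {Ω : Set E} {Δ : E → ℝ} {r : ℕ} {d : ℝ} {y : E} {z : ℂ}

/-- A cone `Ω` with positive determinant `Δ` whose Laplace integrals satisfy the key identity
`∫_Ω e^{-(x|y)} Δ(x)^{s} dx = Γ_Ω(s + n/r) Δ(y)^{-(s + n/r)}` for real `s > -1`; it is written with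
the exponent `s = λ - n/r` in place of `λ`. -/
structure IsGindikinCone (μ : Measure E) (Ω : Set E) (Δ : E → ℝ) (r : ℕ) (d : ℝ) : Prop where
  measurableSet : MeasurableSet Ω
  det_pos : ∀ x ∈ Ω, 0 < Δ x
  zetaIntegral_ofReal : ∀ s : ℝ, -1 < s → ∀ y ∈ Ω,
    zetaIntegral (μ.restrict Ω) (expNegInner y) Δ s =
      gindikinGamma r d (s + dimRankRatio r d) * (Δ y : ℂ) ^ (-(s + dimRankRatio r d : ℂ))

lemma measurable_expNegInner [OpensMeasurableSpace E] (y : E) : Measurable (expNegInner y) := by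
  unfold expNegInner
  fun_prop

namespace IsGindikinCone

variable (hΩ : IsGindikinCone μ Ω Δ r d)
include hΩ

lemma ae_mem : ∀ᵐ x ∂μ.restrict Ω, x ∈ Ω :=
  ae_restrict_mem hΩ.measurableSet

lemma ae_det_pos : ∀ᵐ x ∂μ.restrict Ω, 0 < Δ x :=
  hΩ.ae_mem.mono hΩ.det_pos

lemma zetaConvergent_ofReal (hd : 0 ≤ d) {s : ℝ} (hs : -1 < s) (hy : y ∈ Ω) :
    ZetaConvergent (μ.restrict Ω) (expNegInner y) Δ s := by
  have hΔy : (Δ y : ℂ) ≠ 0 := Complex.ofReal_ne_zero.2 (hΩ.det_pos y hy).ne'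
  apply ZetaConvergent.of_zetaIntegral_ne_zero
  rw [hΩ.zetaIntegral_ofReal s hs y hy]
  refine mul_ne_zero (gindikinGamma_ne_zero hd ?_) (Complex.cpow_ne_zero_iff.2 (.inl hΔy))
  rw [← Complex.ofReal_add, Complex.ofReal_re]
  linarith

lemma aemeasurable_det [OpensMeasurableSpace E] (hd : 0 ≤ d) (hy : y ∈ Ω) :
    AEMeasurable Δ (μ.restrict Ω) := by
  have h : Integrable _ _ := hΩ.zetaConvergent_ofReal hd (s := 1) (by norm_num) hy
  have hΔ := (measurable_expNegInner y).aemeasurable.inv.mul h.aemeasurable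
  refine (Complex.measurable_re.comp_aemeasurable hΔ).congr (.of_forall fun x => ?_)
  simp [inv_mul_cancel_left₀ (expNegInner_ne_zero y x)]

lemma zetaConvergent_expNegInner [OpensMeasurableSpace E] (hd : 0 ≤ d) (hy : y ∈ Ω)
    (hz : -1 < z.re) : ZetaConvergent (μ.restrict Ω) (expNegInner y) Δ z :=
  (hΩ.zetaConvergent_ofReal hd hz hy).of_re_mem_Icc (hΩ.aemeasurable_det hd hy) hΩ.ae_det_pos
    (hΩ.zetaConvergent_ofReal hd hz hy) ⟨le_rfl, le_rfl⟩

-- Both sides times the entire function `1 / Γ_Ω(z + n/r)` are holomorphic, and agree on the reals.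
lemma zetaIntegral_expNegInner [OpensMeasurableSpace E] (hd : 0 ≤ d) (hy : y ∈ Ω)
    (hz : -1 < z.re) :
    zetaIntegral (μ.restrict Ω) (expNegInner y) Δ z =
      gindikinGamma r d (z + dimRankRatio r d) * (Δ y : ℂ) ^ (-(z + dimRankRatio r d)) := by
  have hΔy : (Δ y : ℂ) ≠ 0 := Complex.ofReal_ne_zero.2 (hΩ.det_pos y hy).ne'
  have hne : ∀ w : ℂ, -1 < w.re → gindikinGamma r d (w + dimRankRatio r d) ≠ 0 := fun w hw =>
    gindikinGamma_ne_zero hd (by rw [Complex.add_re, Complex.ofReal_re]; linarith)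
  have hEq := zetaIntegral_mul_eqOn_re_preimage_Icc
    (hΩ.aemeasurable_det hd hy) hΩ.ae_det_pos
    (hΩ.zetaConvergent_ofReal hd hz hy)
    (hΩ.zetaConvergent_ofReal hd (s := z.re + 1) (by linarith) hy)
    (P := fun w => (gindikinGamma r d (w + dimRankRatio r d))⁻¹)
    (G := fun w => (Δ y : ℂ) ^ (-(w + dimRankRatio r d)))
    ((differentiable_inv_gindikinGamma r d).comp (differentiable_id.add_const _))
    ((differentiable_id.add_const _).neg.const_cpow (.inl hΔy))
    le_rfl (by simp) fun s hs => by
      have hs' : -1 < s := hz.trans hs.1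
      rw [hΩ.zetaIntegral_ofReal s hs' y hy, mul_right_comm, mul_inv_cancel₀ (hne s hs'), one_mul]
  rw [mul_comm, ← mul_inv_eq_iff_eq_mul₀ (hne z hz)]
  exact hEq (by simp)

end IsGindikinCone

lemma isGindikinCone_of_laplace {ρ : ℝ} (hρ : ρ = dimRankRatio r d)
    (hΩ : MeasurableSet Ω) (hΔpos : ∀ x ∈ Ω, 0 < Δ x)
    (hLap : ∀ l : ℝ, ((r : ℝ) - 1) * d / 2 < l → ∀ y ∈ Ω,
      ∫ x in Ω, exp (-⟪x, y⟫) * Δ x ^ (l - ρ) ∂μ =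
        ((2 * π) ^ ((r : ℝ) * ((r : ℝ) - 1) * d / 4) *
          ∏ i ∈ Finset.range r, Gamma (l - (i : ℝ) * d / 2)) * Δ y ^ (-l)) :
    IsGindikinCone μ Ω Δ r d where
  measurableSet := hΩ
  det_pos := hΔpos
  zetaIntegral_ofReal s hs y hy := by
    have hl : ((r : ℝ) - 1) * d / 2 < s + ρ := by rw [hρ, dimRankRatio]; linarith
    have hs := hLap _ hl y hy
    rw [add_sub_cancel_right] at hs
    rw [← hρ, ← Complex.ofReal_add, ← Complex.ofReal_neg, ← Complex.ofReal_cpow (hΔpos y hy).le,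
      gindikinGamma_ofReal, ← Complex.ofReal_mul, ← hs]
    exact zetaIntegral_ofReal_ofReal ((ae_restrict_mem hΩ).mono hΔpos) _ s

end GindikinCone

section KBessel

open Set

variable {E : Type*} [NormedAddCommGroup E] [InnerProductSpace ℝ E] {Δ : E → ℝ} {jinv : E → E}
  {x v : E}

/-- The integrand `e^{-(v|e)} Δ(v)^{-λ} · e^{-(x|v⁻¹)} Δ(x)^z` of the double integral
`∫_Ω 𝒦_λ(x) Δ(x)^z dx`, with trace `(v|e)`. -/
noncomputable def kBesselKernel (Δ : E → ℝ) (jinv : E → E) (e : E) (lam z : ℂ) (x v : E) : ℂ :=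
  expNegInner e v * (Δ v : ℂ) ^ (-lam) * (expNegInner (jinv v) x * (Δ x : ℂ) ^ z)

lemma ofReal_norm_kBesselKernel (hx : 0 < Δ x) (hv : 0 < Δ v) (e : E) (lam z : ℂ) :
    (‖kBesselKernel Δ jinv e lam z x v‖ : ℂ) = kBesselKernel Δ jinv e lam.re z.re x v := by
  simp only [kBesselKernel, norm_mul, Complex.ofReal_mul, ofReal_norm_expNegInner,
    Complex.norm_cpow_eq_rpow_re_of_pos hx, Complex.norm_cpow_eq_rpow_re_of_pos hv,
    Complex.ofReal_cpow hx.le, Complex.ofReal_cpow hv.le, Complex.neg_re, Complex.ofReal_neg]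

variable [MeasurableSpace E] {μ : Measure E} {Ω : Set E} {r : ℕ} {d : ℝ} {e : E} {lam z : ℂ}

/-- What the theory of the K-Bessel function needs from the inversion `v ↦ v⁻¹` of a cone. -/
structure IsConeInversion (μ : Measure E) (Ω : Set E) (Δ : E → ℝ) (jinv : E → E) : Prop where
  mapsTo : MapsTo jinv Ω Ω
  det_inv : ∀ v ∈ Ω, Δ (jinv v) = (Δ v)⁻¹
  aemeasurable : AEMeasurable jinv (μ.restrict Ω)

lemma integral_kBesselKernel_right (μ : Measure E) (Ω : Set E) (Δ : E → ℝ) (jinv : E → E) (e : E)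
    (lam z : ℂ) (x : E) :
    ∫ v in Ω, kBesselKernel Δ jinv e lam z x v ∂μ =
      coneKBessel μ Ω Δ (fun v => ⟪v, e⟫) jinv lam x * (Δ x : ℂ) ^ z := by
  rw [coneKBessel, ← integral_mul_const]
  congr with v
  simp only [kBesselKernel, expNegInner, sub_eq_add_neg, ← Complex.ofReal_exp, exp_add,
    Complex.ofReal_mul]
  ring

variable [OpensMeasurableSpace E]

lemma integrable_kBesselKernel_left (hΩ : IsGindikinCone μ Ω Δ r d) (hd : 0 ≤ d)
    (hj : MapsTo jinv Ω Ω) (e : E) (lam : ℂ) (hz : -1 < z.re) (hv : v ∈ Ω) :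
    Integrable (fun x => kBesselKernel Δ jinv e lam z x v) (μ.restrict Ω) :=
  Integrable.const_mul (hΩ.zetaConvergent_expNegInner hd (hj hv) hz) _

lemma integral_kBesselKernel_left (hΩ : IsGindikinCone μ Ω Δ r d)
    (hinv : IsConeInversion μ Ω Δ jinv) (hd : 0 ≤ d) (e : E) (lam : ℂ) (hz : -1 < z.re)
    (hv : v ∈ Ω) :
    ∫ x in Ω, kBesselKernel Δ jinv e lam z x v ∂μ =
      gindikinGamma r d (z + dimRankRatio r d) *
        (expNegInner e v * (Δ v : ℂ) ^ (z + dimRankRatio r d - lam)) := by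
  have hΔv := hΩ.det_pos v hv
  have hcpow : (Δ (jinv v) : ℂ) ^ (-(z + dimRankRatio r d)) =
      (Δ v : ℂ) ^ (z + dimRankRatio r d) := by
    rw [hinv.det_inv v hv, Complex.ofReal_inv, Complex.inv_cpow _ _ (by
      rw [Complex.arg_ofReal_of_nonneg hΔv.le]; exact pi_pos.ne), Complex.cpow_neg, inv_inv]
  have hzeta := hΩ.zetaIntegral_expNegInner hd (hinv.mapsTo hv) hz
  rw [zetaIntegral, hcpow] at hzeta
  simp only [kBesselKernel]
  rw [integral_const_mul, hzeta, sub_eq_add_neg _ lam,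
    Complex.cpow_add _ (-lam) (Complex.ofReal_ne_zero.2 hΔv.ne')]
  ac_rfl

lemma integral_norm_kBesselKernel_left (hΩ : IsGindikinCone μ Ω Δ r d)
    (hinv : IsConeInversion μ Ω Δ jinv) (hd : 0 ≤ d) (e : E) (lam : ℂ) (hz : -1 < z.re)
    (hv : v ∈ Ω) :
    ((∫ x in Ω, ‖kBesselKernel Δ jinv e lam z x v‖ ∂μ : ℝ) : ℂ) =
      gindikinGamma r d (z.re + dimRankRatio r d) *
        (expNegInner e v * (Δ v : ℂ) ^ (z.re + dimRankRatio r d - lam.re : ℂ)) := by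
  rw [← integral_kBesselKernel_left hΩ hinv hd e lam.re (z := z.re) hz hv,
    ← integral_complex_ofReal]
  exact setIntegral_congr_fun hΩ.measurableSet fun x hx =>
    ofReal_norm_kBesselKernel (hΩ.det_pos x hx) (hΩ.det_pos v hv) e lam z

lemma aestronglyMeasurable_kBesselKernel [SecondCountableTopology E] [SFinite μ]
    (hΔ : AEMeasurable Δ (μ.restrict Ω)) (hj : AEMeasurable jinv (μ.restrict Ω)) (e : E)
    (lam z : ℂ) :
    AEStronglyMeasurable (Function.uncurry (kBesselKernel Δ jinv e lam z))
      ((μ.restrict Ω).prod (μ.restrict Ω)) := by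
  have hpow_fst : AEMeasurable (fun q : E × E => (Δ q.1 : ℂ) ^ z)
      ((μ.restrict Ω).prod (μ.restrict Ω)) :=
    (Complex.measurable_ofReal.comp_aemeasurable hΔ.comp_fst).pow_const z
  have hpow_snd : AEMeasurable (fun q : E × E => (Δ q.2 : ℂ) ^ (-lam))
      ((μ.restrict Ω).prod (μ.restrict Ω)) :=
    (Complex.measurable_ofReal.comp_aemeasurable hΔ.comp_snd).pow_const (-lam)
  have hexp : AEMeasurable (fun q : E × E => expNegInner (jinv q.2) q.1)
      ((μ.restrict Ω).prod (μ.restrict Ω)) :=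
    Complex.measurable_ofReal.comp_aemeasurable
      (measurable_fst.aemeasurable.inner hj.comp_snd).neg.exp
  exact ((((measurable_expNegInner e).comp measurable_snd).aemeasurable.mul hpow_snd).mul
    (hexp.mul hpow_fst)).aestronglyMeasurable

variable [SecondCountableTopology E] [SFinite μ]
  (hΩ : IsGindikinCone μ Ω Δ r d) (hinv : IsConeInversion μ Ω Δ jinv) (hd : 0 ≤ d) (he : e ∈ Ω)
include hΩ hinv hd he

lemma integrable_kBesselKernel
    (hz : -1 < z.re) (hzlam : -1 - dimRankRatio r d < z.re - lam.re) :
    Integrable (Function.uncurry (kBesselKernel Δ jinv e lam z))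
      ((μ.restrict Ω).prod (μ.restrict Ω)) := by
  rw [integrable_prod_iff' (aestronglyMeasurable_kBesselKernel (hΩ.aemeasurable_det hd he)
    hinv.aemeasurable e lam z)]
  refine ⟨hΩ.ae_mem.mono fun v hv =>
    integrable_kBesselKernel_left hΩ hd hinv.mapsTo e lam hz hv, ?_⟩
  have hconv : ZetaConvergent (μ.restrict Ω) (expNegInner e) Δ
      (z.re + dimRankRatio r d - lam.re) := by
    refine hΩ.zetaConvergent_expNegInner hd he ?_
    simp only [Complex.sub_re, Complex.add_re, Complex.ofReal_re]
    linarith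
  refine (Integrable.const_mul hconv (gindikinGamma r d (z.re + dimRankRatio r d))).re.congr ?_
  filter_upwards [hΩ.ae_mem] with v hv
  rw [← integral_norm_kBesselKernel_left hΩ hinv hd e lam hz hv]
  exact Complex.ofReal_re _

lemma zetaConvergent_coneKBessel
    (hz : -1 < z.re) (hzlam : -1 - dimRankRatio r d < z.re - lam.re) :
    ZetaConvergent (μ.restrict Ω) (coneKBessel μ Ω Δ (fun v => ⟪v, e⟫) jinv lam) Δ z := by
  simp only [ZetaConvergent, ← integral_kBesselKernel_right]
  exact (integrable_kBesselKernel hΩ hinv hd he hz hzlam).integral_prod_left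

lemma zetaIntegral_coneKBessel
    (hz : -1 < z.re) (hzlam : -1 - dimRankRatio r d < z.re - lam.re) :
    zetaIntegral (μ.restrict Ω) (coneKBessel μ Ω Δ (fun v => ⟪v, e⟫) jinv lam) Δ z =
      gindikinGamma r d (z + dimRankRatio r d) *
        gindikinGamma r d (z - lam + 2 * dimRankRatio r d) *
          (Δ e : ℂ) ^ (-(z - lam + 2 * dimRankRatio r d)) := by
  have hre : -1 < (z + dimRankRatio r d - lam).re := by
    rw [Complex.sub_re, Complex.add_re, Complex.ofReal_re]
    linarith
  calc zetaIntegral (μ.restrict Ω) (coneKBessel μ Ω Δ (fun v => ⟪v, e⟫) jinv lam) Δ z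
      = ∫ x in Ω, ∫ v in Ω, kBesselKernel Δ jinv e lam z x v ∂μ ∂μ := by
        simp only [zetaIntegral, integral_kBesselKernel_right]
    _ = ∫ v in Ω, ∫ x in Ω, kBesselKernel Δ jinv e lam z x v ∂μ ∂μ :=
        integral_integral_swap (integrable_kBesselKernel hΩ hinv hd he hz hzlam)
    _ = gindikinGamma r d (z + dimRankRatio r d) *
          zetaIntegral (μ.restrict Ω) (expNegInner e) Δ (z + dimRankRatio r d - lam) := by
        rw [zetaIntegral, ← integral_const_mul]
        exact setIntegral_congr_fun hΩ.measurableSet fun v hv =>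
          integral_kBesselKernel_left hΩ hinv hd e lam hz hv
    _ = _ := by
        rw [hΩ.zetaIntegral_expNegInner hd he hre, ← mul_assoc]
        ring_nf

lemma zetaIntegral_coneKBessel_mul_inv_gindikinGamma
    (h : ZetaConvergent (μ.restrict Ω) (coneKBessel μ Ω Δ (fun v => ⟪v, e⟫) jinv lam) Δ z)
    {w : ℂ} (hzw : z.re ≤ w.re) :
    zetaIntegral (μ.restrict Ω) (coneKBessel μ Ω Δ (fun v => ⟪v, e⟫) jinv lam) Δ w *
        (gindikinGamma r d (w + dimRankRatio r d) *
          gindikinGamma r d (w - lam + 2 * dimRankRatio r d))⁻¹ =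
      (Δ e : ℂ) ^ (-(w - lam + 2 * dimRankRatio r d)) := by
  have hΔe : (Δ e : ℂ) ≠ 0 := Complex.ofReal_ne_zero.2 (hΩ.det_pos e he).ne'
  obtain ⟨c, hwc, hc, hclam⟩ : ∃ c : ℝ, w.re ≤ c ∧ -1 ≤ c ∧ lam.re - 1 - dimRankRatio r d ≤ c :=
    ⟨max w.re (max (-1) (lam.re - 1 - dimRankRatio r d)), by simp, by simp, by simp⟩
  have hconv := zetaConvergent_coneKBessel hΩ hinv hd he (z := (c + 1 : ℝ)) (lam := lam)
    (by rw [Complex.ofReal_re]; linarith) (by rw [Complex.ofReal_re]; linarith)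
  have hP : Differentiable ℂ fun w => (gindikinGamma r d (w + dimRankRatio r d) *
      gindikinGamma r d (w - lam + 2 * dimRankRatio r d))⁻¹ := by
    simp only [mul_inv]
    exact ((differentiable_inv_gindikinGamma r d).comp (differentiable_id.add_const _)).mul
      ((differentiable_inv_gindikinGamma r d).comp
        ((differentiable_id.sub_const _).add_const _))
  have hG : Differentiable ℂ fun w => (Δ e : ℂ) ^ (-(w - lam + 2 * dimRankRatio r d)) :=
    ((differentiable_id.sub_const _).add_const _).neg.const_cpow (.inl hΔe)
  refine zetaIntegral_mul_eqOn_re_preimage_Icc (hΩ.aemeasurable_det hd he) hΩ.ae_det_pos h hconv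
    hP hG (hzw.trans hwc) (by simp) (fun s hs => ?_) ⟨hzw, by rw [Complex.ofReal_re]; linarith⟩
  have hcs : c < s := hs.1
  have hΓ : gindikinGamma r d (s + dimRankRatio r d) ≠ 0 :=
    gindikinGamma_ne_zero hd (by simp; linarith)
  have hΓlam : gindikinGamma r d (s - lam + 2 * dimRankRatio r d) ≠ 0 :=
    gindikinGamma_ne_zero hd (by simp; linarith)
  rw [zetaIntegral_coneKBessel hΩ hinv hd he (by rw [Complex.ofReal_re]; linarith)
    (by rw [Complex.ofReal_re]; linarith), mul_right_comm,
    mul_inv_cancel₀ (mul_ne_zero hΓ hΓlam), one_mul]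

lemma gindikinGamma_ne_zero_of_zetaConvergent_coneKBessel
    (h : ZetaConvergent (μ.restrict Ω) (coneKBessel μ Ω Δ (fun v => ⟪v, e⟫) jinv lam) Δ z)
    {w : ℂ} (hzw : z.re ≤ w.re) :
    gindikinGamma r d (w + dimRankRatio r d) ≠ 0 ∧
      gindikinGamma r d (w - lam + 2 * dimRankRatio r d) ≠ 0 := by
  have hΔe : (Δ e : ℂ) ≠ 0 := Complex.ofReal_ne_zero.2 (hΩ.det_pos e he).ne'
  have heq := zetaIntegral_coneKBessel_mul_inv_gindikinGamma hΩ hinv hd he h hzw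
  rw [← mul_ne_zero_iff, ← inv_eq_zero.ne]
  exact right_ne_zero_of_mul (heq.trans_ne (Complex.cpow_ne_zero_iff.2 (.inl hΔe)))

theorem coneKBessel_weighted_integral_general (hr : 1 ≤ r) (lam z : ℂ) :
    (ZetaConvergent (μ.restrict Ω) (coneKBessel μ Ω Δ (fun v => ⟪v, e⟫) jinv lam) Δ z ↔
      -1 < z.re ∧ -1 - dimRankRatio r d < z.re - lam.re) ∧
    (-1 < z.re ∧ -1 - dimRankRatio r d < z.re - lam.re →
      zetaIntegral (μ.restrict Ω) (coneKBessel μ Ω Δ (fun v => ⟪v, e⟫) jinv lam) Δ z =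
        gindikinGamma r d (z + dimRankRatio r d) *
          gindikinGamma r d (z - lam + 2 * dimRankRatio r d) *
            (Δ e : ℂ) ^ (-(z - lam + 2 * dimRankRatio r d))) := by
  refine ⟨⟨fun h => ?_, fun hz => zetaConvergent_coneKBessel hΩ hinv hd he hz.1 hz.2⟩,
    fun hz => zetaIntegral_coneKBessel hΩ hinv hd he hz.1 hz.2⟩
  have hpole := gindikinGamma_dimRankRatio_sub_one hr d
  constructor <;> by_contra! hle
  · refine (gindikinGamma_ne_zero_of_zetaConvergent_coneKBessel hΩ hinv hd he h (w := -1)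
      (by simpa using hle)).1 ?_
    rwa [neg_add_eq_sub]
  · refine (gindikinGamma_ne_zero_of_zetaConvergent_coneKBessel hΩ hinv hd he h
      (w := lam - 1 - dimRankRatio r d) ?_).2 ?_
    · simp only [Complex.sub_re, Complex.one_re, Complex.ofReal_re]
      linarith
    · rw [← hpole]
      ring_nf

end KBessel

section UnitalBilinearProduct

open Set

variable {E : Type*} [NormedAddCommGroup E] [NormedSpace ℝ E] [FiniteDimensional ℝ E]
  {B : E →ₗ[ℝ] E →ₗ[ℝ] E} {one : E}

-- The derivative of `y ↦ y * y` at the unit is `2 • id`.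
lemma unit_mem_interior_setOf_squares (hleft : ∀ x, B one x = x) (hright : ∀ x, B x one = x) :
    one ∈ interior {x | ∃ y, x = B y y} := by
  have hderiv := (LinearMap.toContinuousBilinearMap B).hasStrictFDerivAt_of_bilinear
    (hasStrictFDerivAt_id one) (hasStrictFDerivAt_id one)
  have hmap := hderiv.map_nhds_eq_of_surj (LinearMap.range_eq_top.2 fun w =>
    ⟨(1 / 2 : ℝ) • w, by simp [hleft, hright, ← two_smul ℝ, smul_smul]⟩)
  rw [mem_interior_iff_mem_nhds, ← hleft one]
  exact hmap ▸ Filter.mem_map.2 (Filter.univ_mem' fun y => ⟨y, rfl⟩)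

lemma isUnit_toContinuousBilinearMap_iff {v : E} :
    IsUnit (B.toContinuousBilinearMap v) ↔ IsUnit (B v : Module.End ℝ E) :=
  MulEquiv.isUnit_map (Module.End.toContinuousLinearMap (𝕜 := ℝ) E)

lemma isOpen_setOf_isUnit_toContinuousBilinearMap (B : E →ₗ[ℝ] E →ₗ[ℝ] E) :
    IsOpen {v | IsUnit (B.toContinuousBilinearMap v)} :=
  Units.isOpen.preimage B.toContinuousBilinearMap.continuous

variable [MeasurableSpace E] [BorelSpace E] (μ : Measure E) [μ.IsAddHaarMeasure]

-- On each line `v + ℝ • one`, the multiplication by `v + t • one` is singular only when `-t` is one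
-- of the finitely many eigenvalues of the multiplication by `v`.
lemma ae_isUnit_toContinuousBilinearMap (hleft : ∀ x, B one x = x) :
    ∀ᵐ v ∂μ, IsUnit (B.toContinuousBilinearMap v) := by
  refine ae_mem_of_ae_add_linearMap_mem (LinearMap.toSpanSingleton ℝ E one) volume μ
    (isOpen_setOf_isUnit_toContinuousBilinearMap B).measurableSet fun v => ?_
  have hnull : volume (Neg.neg ⁻¹' spectrum ℝ (B v : Module.End ℝ E)) = 0 :=
    ((Module.End.finite_spectrum _).preimage neg_injective.injOn).measure_zero _
  have hone : B one = (1 : Module.End ℝ E) := LinearMap.ext hleft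
  filter_upwards [measure_eq_zero_iff_ae_notMem.1 hnull] with t ht
  have hB : B (v + t • one) = -(algebraMap ℝ (Module.End ℝ E) (-t) - B v) := by
    rw [map_add, map_smul, hone, Algebra.algebraMap_eq_smul_one]
    module
  rw [mem_preimage, spectrum.notMem_iff, ← IsUnit.neg_iff, ← hB] at ht
  exact isUnit_toContinuousBilinearMap_iff.2 ht

lemma aemeasurable_of_mul_eq (hleft : ∀ x, B one x = x) {s : Set E} (hs : MeasurableSet s)
    {f : E → E} {w : E} (hf : ∀ v ∈ s, B v (f v) = w) : AEMeasurable f (μ.restrict s) := by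
  have hcont : ContinuousOn (fun v => Ring.inverse (B.toContinuousBilinearMap v) w)
      {v | IsUnit (B.toContinuousBilinearMap v)} := by
    rintro v ⟨u, hu⟩
    have hinverse : ContinuousAt Ring.inverse (B.toContinuousBilinearMap v) :=
      hu ▸ NormedRing.inverse_continuousAt u
    exact ((hinverse.comp B.toContinuousBilinearMap.continuous.continuousAt).clm_apply
      continuousAt_const).continuousWithinAt
  have hmeas : AEMeasurable (fun v => Ring.inverse (B.toContinuousBilinearMap v) w) μ := by
    rw [← Measure.restrict_eq_self_of_ae_mem (ae_isUnit_toContinuousBilinearMap μ hleft)]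
    exact hcont.aemeasurable (isOpen_setOf_isUnit_toContinuousBilinearMap B).measurableSet
  refine hmeas.restrict.congr ?_
  filter_upwards [ae_restrict_of_ae (ae_isUnit_toContinuousBilinearMap μ hleft),
    ae_restrict_mem hs] with v hunit hv
  calc Ring.inverse (B.toContinuousBilinearMap v) w
      = (Ring.inverse (B.toContinuousBilinearMap v) * B.toContinuousBilinearMap v) (f v) := by
        rw [← hf v hv]
        rfl
    _ = f v := by rw [Ring.inverse_mul_cancel _ hunit, one_apply_eq_self]

end UnitalBilinearProduct

/-- **Convergence and value of the K-Bessel integral.** Let `Ω` be the symmetric cone of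
a Euclidean Jordan algebra of rank `r` and dimension `n`, with determinant `Δ`.  For
`λ ∈ ℂ` and `m ∈ ℝ`, the integral `∫_Ω 𝒦_λ(x) Δ(x)^m dx` converges if and only if
`m > −1` and `m − Re λ > −2 − (r−1)d/2`, and in that case it equals
`Γ_Ω(m + n/r)·Γ_Ω(m − λ + 2n/r)`. -/
theorem coneKBessel_weighted_integral
    {E : Type*} [NormedAddCommGroup E] [InnerProductSpace ℝ E] [FiniteDimensional ℝ E]
    [MeasurableSpace E] [BorelSpace E]
    (μ : Measure E) [μ.IsAddHaarMeasure]
    (jmul : E →ₗ[ℝ] E →ₗ[ℝ] E) (one : E) (Ω : Set E) (Δ tr : E → ℝ) (jinv : E → E)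
    (r : ℕ) (d : ℝ) (hr : 1 ≤ r) (hd : 0 < d)
    (hcomm : ∀ x y, jmul x y = jmul y x)
    (hjordan : ∀ x y, jmul (jmul x x) (jmul x y) = jmul x (jmul (jmul x x) y))
    (hone : ∀ x, jmul one x = x)
    (htr : ∀ x, tr x = ⟪x, one⟫)
    (hinner : ∀ x y, ⟪x, y⟫ = tr (jmul x y))
    (hΩ : Ω = interior {x | ∃ y, x = jmul y y})
    (hdim : (Module.finrank ℝ E : ℝ) = r + r * ((r : ℝ) - 1) * d / 2)
    (hΔpos : ∀ x ∈ Ω, 0 < Δ x)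
    (hΔone : Δ one = 1)
    (hΔhom : ∀ c : ℝ, 0 < c → ∀ x, Δ (c • x) = c ^ r * Δ x)
    (hinvΩ : ∀ x ∈ Ω, jinv x ∈ Ω)
    (hinvinv : ∀ x ∈ Ω, jinv (jinv x) = x)
    (hinvmul : ∀ x ∈ Ω, jmul x (jinv x) = one)
    (hΔinv : ∀ x ∈ Ω, Δ (jinv x) = (Δ x)⁻¹)
    (hLap : ∀ l : ℝ, ((r : ℝ) - 1) * d / 2 < l → ∀ y ∈ Ω,
      ∫ x in Ω, Real.exp (-⟪x, y⟫) * Δ x ^ (l - (Module.finrank ℝ E : ℝ) / r) ∂μ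
        = ((2 * Real.pi) ^ ((r : ℝ) * ((r : ℝ) - 1) * d / 4)
            * ∏ i ∈ Finset.range r, Real.Gamma (l - (i : ℝ) * d / 2)) * Δ y ^ (-l))
    (lam : ℂ) (m : ℝ) :
    (IntegrableOn
        (fun x => coneKBessel μ Ω Δ tr jinv lam x * ((Δ x ^ m : ℝ) : ℂ)) Ω μ
      ↔ (-1 < m ∧ -2 - ((r : ℝ) - 1) * d / 2 < m - lam.re)) ∧
    ((-1 < m ∧ -2 - ((r : ℝ) - 1) * d / 2 < m - lam.re) →
      ∫ x in Ω, coneKBessel μ Ω Δ tr jinv lam x * ((Δ x ^ m : ℝ) : ℂ) ∂μ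
        = gindikinGamma r d ((m : ℂ) + (Module.finrank ℝ E : ℝ) / r)
            * gindikinGamma r d ((m : ℂ) - lam + 2 * (Module.finrank ℝ E : ℝ) / r)) := by
  obtain rfl : tr = fun v => ⟪v, one⟫ := funext htr
  have hratio : (Module.finrank ℝ E : ℝ) / r = dimRankRatio r d := by
    rw [hdim, dimRankRatio]
    field_simp
  have hΩmeas : MeasurableSet Ω := hΩ ▸ isOpen_interior.measurableSet
  have hcone : IsGindikinCone μ Ω Δ r d := isGindikinCone_of_laplace hratio hΩmeas hΔpos hLap
  have hinv : IsConeInversion μ Ω Δ jinv :=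
    ⟨hinvΩ, hΔinv, aemeasurable_of_mul_eq μ hone hΩmeas hinvmul⟩
  have hone_mem : one ∈ Ω :=
    hΩ ▸ unit_mem_interior_setOf_squares hone fun x => (hcomm x one).trans (hone x)
  have key := coneKBessel_weighted_integral_general hcone hinv hd.le hone_mem hr lam m
  have hbound : -1 - dimRankRatio r d = -2 - ((r : ℝ) - 1) * d / 2 := by
    rw [dimRankRatio]
    ring
  rw [zetaConvergent_ofReal_iff hcone.ae_det_pos, zetaIntegral_ofReal hcone.ae_det_pos, hΔone,
    Complex.ofReal_one, Complex.one_cpow, mul_one, Complex.ofReal_re, hbound, ← hratio,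
    Complex.ofReal_div, ← mul_div_assoc] at key
  exact key
end
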